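/- Let G be a finitely generated group, let V be a finite-dimensional vector space over ℚ equipped with a linear action of G, and let W ⊆ V be a G-invariant subspace such that V/W is one-dimensional and the induced action of G on V/W is trivial. Let W_ℤ ⊆ W be a G-invariant finitely generated ℤ-submodule that spans W over ℚ. Then there exists a G-invariant finitely generated ℤ-submodule V_ℤ ⊆ V that spans V over ℚ and satisfies V_ℤ ∩ W = W_ℤ. -/

import Mathlib

/-!
Choose `v ∉ W`. Each `ρ s v - v` lies in `W = ℚ · Wz`, so, since `G` has a finite generating set
`S`, some `n > 0` satisfies `n • (ρ s v - v) ∈ Wz` for all `s ∈ S`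
(`exists_common_denominator`). Put `u = n • v`. The elements `g` with `ρ g u - u ∈ Wz` are closed
under products and inverses because `Wz` is invariant (`sub_mem_of_closure`), so they exhaust `G`.
Hence `Wz + ℤ u` is invariant. It spans `V` because `V / W` is a line, and it meets `W` in `Wz`
because no nonzero multiple of `u` lies in `W`.
-/

/-- Every element of the `ℚ`-span of an additive subgroup has a denominator. -/
lemma exists_denominator {V : Type*} [AddCommGroup V] [Module ℚ V] (L : Submodule ℤ V)
    {x : V} (hx : x ∈ Submodule.span ℚ (L : Set V)) : ∃ n : ℕ, 0 < n ∧ n • x ∈ L := by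
  induction hx using Submodule.span_induction with
  | mem x hx => exact ⟨1, one_pos, by simpa using hx⟩
  | zero => exact ⟨1, one_pos, by simp⟩
  | add x y _ _ hx hy =>
    obtain ⟨m, hm, hmx⟩ := hx
    obtain ⟨n, hn, hny⟩ := hy
    refine ⟨m * n, Nat.mul_pos hm hn, ?_⟩
    rw [smul_add]
    refine L.add_mem ?_ ?_
    · rw [mul_comm, mul_smul]
      exact nsmul_mem hmx n
    · rw [mul_smul]
      exact nsmul_mem hny m
  | smul q x _ hx =>
    obtain ⟨m, hm, hmx⟩ := hx
    refine ⟨q.den * m, Nat.mul_pos q.den_pos hm, ?_⟩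
    have h : (q.den * m) • (q • x) = q.num • (m • x) := by
      rw [← Nat.cast_smul_eq_nsmul ℚ, ← Nat.cast_smul_eq_nsmul ℚ, ← Int.cast_smul_eq_zsmul ℚ,
        smul_smul, smul_smul]
      congr 1
      rw [Nat.cast_mul, mul_right_comm, Rat.den_mul_eq_num]
    rw [h]
    exact L.smul_mem _ hmx

lemma exists_common_denominator {ι V : Type*} [AddCommGroup V] [Module ℚ V]
    (L : Submodule ℤ V) (f : ι → V) (hf : ∀ i, f i ∈ Submodule.span ℚ (L : Set V))
    (S : Finset ι) : ∃ n : ℕ, 0 < n ∧ ∀ i ∈ S, n • f i ∈ L := by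
  choose d hd hdL using fun i => exists_denominator L (hf i)
  refine ⟨∏ i ∈ S, d i, Finset.prod_pos fun i _ => hd i, fun i hi => ?_⟩
  obtain ⟨k, hk⟩ := Finset.dvd_prod_of_mem d hi
  rw [hk, mul_comm, mul_smul]
  exact nsmul_mem (hdL i) k

/-- The condition `ρ g u - u ∈ L`, for an invariant `L`, passes from a set of group elements to
the subgroup it generates. -/
lemma sub_mem_of_closure {G V : Type*} [Group G] [AddCommGroup V] [Module ℚ V]
    (ρ : Representation ℚ G V) (L : Submodule ℤ V) (hL : ∀ (g : G), ∀ x ∈ L, ρ g x ∈ L)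
    (u : V) (S : Set G) (hS : ∀ s ∈ S, ρ s u - u ∈ L) {g : G} (hg : g ∈ Subgroup.closure S) :
    ρ g u - u ∈ L := by
  induction hg using Subgroup.closure_induction with
  | mem s hs => exact hS s hs
  | one => simp
  | mul a b _ _ ha hb =>
    have h : ρ (a * b) u - u = ρ a (ρ b u - u) + (ρ a u - u) := by
      simp [map_mul]
    rw [h]
    exact L.add_mem (hL a _ hb) ha
  | inv a _ ha =>
    have h : ρ a⁻¹ u - u = -ρ a⁻¹ (ρ a u - u) := by
      simp
    rw [h]
    exact L.neg_mem (hL _ _ ha)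

/-- Let `G` be a finitely generated group acting linearly on a finite-dimensional
`ℚ`-vector space `V`, let `W ⊆ V` be a `G`-invariant subspace with `V/W`
one-dimensional and with trivial induced `G`-action, and let `Wz ⊆ W` be a
`G`-invariant finitely generated `ℤ`-submodule spanning `W` over `ℚ`.  Then there is
a `G`-invariant finitely generated `ℤ`-submodule `Vz ⊆ V` spanning `V` over `ℚ`
with `Vz ∩ W = Wz`. -/
theorem exists_invariant_lattice {G V : Type*} [Group G] [Group.FG G]
    [AddCommGroup V] [Module ℚ V] [FiniteDimensional ℚ V]
    (ρ : Representation ℚ G V)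
    (W : Submodule ℚ V)
    (hWinv : ∀ (g : G), ∀ x ∈ W, ρ g x ∈ W)
    (hquot : Module.finrank ℚ (V ⧸ W) = 1)
    (htriv : ∀ (g : G) (v : V), ρ g v - v ∈ W)
    (Wz : Submodule ℤ V)
    (hWzW : (Wz : Set V) ⊆ (W : Set V))
    (hWzinv : ∀ (g : G), ∀ x ∈ Wz, ρ g x ∈ Wz)
    (hWzfg : Wz.FG)
    (hWzspan : Submodule.span ℚ (Wz : Set V) = W) :
    ∃ Vz : Submodule ℤ V, Vz.FG ∧ (∀ (g : G), ∀ x ∈ Vz, ρ g x ∈ Vz) ∧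
      Submodule.span ℚ (Vz : Set V) = ⊤ ∧
      (Vz : Set V) ∩ (W : Set V) = (Wz : Set V) := by
  obtain ⟨v', hv', hgen⟩ := finrank_eq_one_iff'.mp hquot
  obtain ⟨v, rfl⟩ := W.mkQ_surjective v'
  have hvW : v ∉ W := fun h => hv' ((Submodule.Quotient.mk_eq_zero W).mpr h)
  obtain ⟨S, hS⟩ := Group.fg_def.mp (inferInstance : Group.FG G)
  obtain ⟨n, hn, hnS⟩ := exists_common_denominator Wz (fun g => ρ g v - v)
    (fun g => hWzspan ▸ htriv g v) S
  have hn0 : (n : ℚ) ≠ 0 := by exact_mod_cast hn.ne'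
  have hu : ∀ g : G, ρ g (n • v) - n • v ∈ Wz := fun g =>
    sub_mem_of_closure ρ Wz hWzinv (n • v) S
      (fun s hs => by simpa [smul_sub] using hnS s hs) (hS ▸ Subgroup.mem_top g)
  have hmem : ∀ x, x ∈ Wz ⊔ Submodule.span ℤ {n • v} ↔ ∃ w ∈ Wz, ∃ a : ℤ, w + a • n • v = x := by
    intro x
    simp [Submodule.mem_sup, Submodule.mem_span_singleton]
  refine ⟨Wz ⊔ Submodule.span ℤ {n • v}, hWzfg.sup (Submodule.fg_span_singleton _), ?_, ?_, ?_⟩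
  · intro g x hx
    obtain ⟨w, hw, a, rfl⟩ := (hmem x).mp hx
    refine (hmem _).mpr ⟨ρ g w + a • (ρ g (n • v) - n • v),
      Wz.add_mem (hWzinv g w hw) (Wz.smul_mem a (hu g)), a, ?_⟩
    rw [map_add, map_zsmul, smul_sub]
    abel
  · rw [eq_top_iff]
    intro x _
    have hW : W ≤ Submodule.span ℚ ((Wz ⊔ Submodule.span ℤ {n • v} : Submodule ℤ V) : Set V) := by
      rw [← hWzspan]
      exact Submodule.span_mono fun y hy => Submodule.mem_sup_left hy
    have hv : v ∈ Submodule.span ℚ ((Wz ⊔ Submodule.span ℤ {n • v} : Submodule ℤ V) : Set V) := by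
      have h : n • v ∈ Submodule.span ℚ
          ((Wz ⊔ Submodule.span ℤ {n • v} : Submodule ℤ V) : Set V) :=
        Submodule.subset_span (Submodule.mem_sup_right (Submodule.mem_span_singleton_self _))
      refine (Submodule.smul_mem_iff _ hn0).mp ?_
      rwa [Nat.cast_smul_eq_nsmul ℚ]
    obtain ⟨c, hc⟩ := hgen (W.mkQ x)
    rw [← map_smul] at hc
    have hxc : x - c • v ∈ W := (Submodule.Quotient.eq W).mp hc.symm
    simpa using Submodule.add_mem _ (hW hxc) (Submodule.smul_mem _ c hv)
  · ext x
    constructor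
    · rintro ⟨hx, hxW⟩
      obtain ⟨w, hw, a, rfl⟩ := (hmem x).mp hx
      have h : a • n • v ∈ W := (W.add_mem_iff_right (hWzW hw)).mp hxW
      rw [← Nat.cast_smul_eq_nsmul ℚ, ← Int.cast_smul_eq_zsmul ℚ, smul_smul] at h
      have ha : a = 0 := by
        by_contra ha
        exact hvW ((Submodule.smul_mem_iff _
          (mul_ne_zero (Int.cast_ne_zero.mpr ha) hn0)).mp h)
      simpa [ha] using hw
    · intro hx
      exact ⟨Submodule.mem_sup_left hx, hWzW hx⟩
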